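/- Let Q be a semi-universally flexible loop and a, b, c ∈ Q. Then the following five statements are equivalent: (i) (a·b)·c = a·(b·c); (ii) (a·b)·(a·c) = a·(b·(a·c)); (iii) ((a·c)·b)·c = (a·c)·(b·c); (iv) (a·b)·(a\c) = a·(b·(a\c)); (v) ((a/c)·b)·c = (a/c)·(b·c). -/

import Mathlib

/-- A loop `(Q, ·, \, /, 1)`: `mul x y = x·y`, `ld x y = x\y`, `rd x y = x/y`. -/
structure LoopStr (Q : Type*) where
  mul : Q → Q → Q
  ld : Q → Q → Q
  rd : Q → Q → Q
  one : Q
  ld_mul : ∀ x y, ld x (mul x y) = y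
  rd_mul : ∀ x y, rd (mul y x) x = y
  mul_ld : ∀ x y, mul x (ld x y) = y
  mul_rd : ∀ x y, mul (rd y x) x = y
  one_mul : ∀ x, mul one x = x
  mul_one : ∀ x, mul x one = x

/-- Flexibility `x ∘ (y ∘ x) = (x ∘ y) ∘ x` of a binary operation, unbundled so that it applies to
principal isotopes of a loop. -/
def IsFlexible {Q : Type*} (op : Q → Q → Q) : Prop :=
  ∀ x y, op x (op y x) = op (op x y) x

namespace LoopStr

variable {Q : Type*}

/-- Left semi-universal flexibility: every left principal isotope `(x / u) · y` is flexible. -/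
def IsLeftSUF (L : LoopStr Q) : Prop :=
  ∀ u, IsFlexible fun x y => L.mul (L.rd x u) y

/-- Right semi-universal flexibility: every right principal isotope `x · (v \ y)` is flexible. -/
def IsRightSUF (L : LoopStr Q) : Prop :=
  ∀ v, IsFlexible fun x y => L.mul x (L.ld v y)

/-- The ordered triple `(a, b, c)` associates, that is, its associator is trivial. -/
def Associates (L : LoopStr Q) (a b c : Q) : Prop :=
  L.mul (L.mul a b) c = L.mul a (L.mul b c)

/-- The opposite loop, used to deduce statements about right isotopes from those about left ones.
Reversing the product exchanges the two divisions. -/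
def opposite (L : LoopStr Q) : LoopStr Q where
  mul x y := L.mul y x
  ld x y := L.rd y x
  rd x y := L.ld y x
  one := L.one
  ld_mul := L.rd_mul
  rd_mul := L.ld_mul
  mul_ld := L.mul_rd
  mul_rd := L.mul_ld
  one_mul := L.mul_one
  mul_one := L.one_mul

variable {L : LoopStr Q}

theorem mul_left_injective (c : Q) : Function.Injective fun x => L.mul x c :=
  Function.LeftInverse.injective (g := fun x => L.rd x c) (L.rd_mul c)

theorem eq_rd_iff_mul_eq {x y z : Q} : x = L.rd z y ↔ L.mul x y = z := by
  rw [← (L.mul_left_injective y).eq_iff, L.mul_rd]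

theorem opposite_associates_iff {a b c : Q} :
    L.opposite.Associates a b c ↔ L.Associates c b a :=
  eq_comm

theorem IsRightSUF.opposite (hL : L.IsRightSUF) : L.opposite.IsLeftSUF :=
  fun v x y => (hL v x y).symm

theorem IsLeftSUF.mul_mul_mul_eq (hL : L.IsLeftSUF) (a b c : Q) :
    L.mul a (L.mul b (L.mul a c)) = L.mul (L.rd (L.mul a (L.mul b c)) c) (L.mul a c) := by
  simpa only [L.rd_mul] using hL c (L.mul a c) (L.mul b c)

theorem IsLeftSUF.associates_mul_iff (hL : L.IsLeftSUF) (a b c : Q) :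
    L.Associates a b (L.mul a c) ↔ L.Associates a b c :=
  calc
    L.Associates a b (L.mul a c)
      ↔ L.mul (L.mul a b) (L.mul a c) =
          L.mul (L.rd (L.mul a (L.mul b c)) c) (L.mul a c) := by
        rw [Associates, hL.mul_mul_mul_eq]
    _ ↔ L.mul a b = L.rd (L.mul a (L.mul b c)) c := (L.mul_left_injective _).eq_iff
    _ ↔ L.Associates a b c := eq_rd_iff_mul_eq

theorem IsLeftSUF.associates_ld_iff (hL : L.IsLeftSUF) (a b c : Q) :
    L.Associates a b (L.ld a c) ↔ L.Associates a b c := by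
  rw [← hL.associates_mul_iff a b (L.ld a c), L.mul_ld]

theorem IsRightSUF.mul_associates_iff (hL : L.IsRightSUF) (a b c : Q) :
    L.Associates (L.mul a c) b c ↔ L.Associates a b c :=
  opposite_associates_iff.symm.trans <|
    (hL.opposite.associates_mul_iff c b a).trans opposite_associates_iff

theorem IsRightSUF.rd_associates_iff (hL : L.IsRightSUF) (a b c : Q) :
    L.Associates (L.rd a c) b c ↔ L.Associates a b c := by
  rw [← hL.mul_associates_iff (L.rd a c) b c, L.mul_rd]

end LoopStr

/-- In an SUF loop, five associativity conditions are equivalent. -/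
theorem suf_assoc_tfae {Q : Type*} (L : LoopStr Q)
    (lsuf : ∀ x y u,
      L.mul (L.rd x u) (L.mul (L.rd y u) x)
        = L.mul (L.rd (L.mul (L.rd x u) y) u) x)
    (rsuf : ∀ x y v,
      L.mul x (L.ld v (L.mul y (L.ld v x)))
        = L.mul (L.mul x (L.ld v y)) (L.ld v x))
    (a b c : Q) :
    [L.mul (L.mul a b) c = L.mul a (L.mul b c),
     L.mul (L.mul a b) (L.mul a c) = L.mul a (L.mul b (L.mul a c)),
     L.mul (L.mul (L.mul a c) b) c = L.mul (L.mul a c) (L.mul b c),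
     L.mul (L.mul a b) (L.ld a c) = L.mul a (L.mul b (L.ld a c)),
     L.mul (L.mul (L.rd a c) b) c = L.mul (L.rd a c) (L.mul b c)].TFAE := by
  have hleft : L.IsLeftSUF := fun u x y => lsuf x y u
  have hright : L.IsRightSUF := fun v x y => rsuf x y v
  tfae_have 2 ↔ 1 := hleft.associates_mul_iff a b c
  tfae_have 3 ↔ 1 := hright.mul_associates_iff a b c
  tfae_have 4 ↔ 1 := hleft.associates_ld_iff a b c
  tfae_have 5 ↔ 1 := hright.rd_associates_iff a b c
  tfae_finish
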